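/- arXiv:2301.13518 — 2 statements merged into one kernel-verified Lean document; each statement's English description precedes it below -/
import Mathlib

section
/- Let $a \geq 1$ be an integer, and let $s \geq 2$ be an integer. Then the functions $1$, $e^z$, $e^z E_{a,2}(-z)$, $e^z E_{a,3}(-z)$, \ldots, $e^z E_{a,s}(-z)$ are linearly independent over $\mathbb{C}(z)$: if $p, q, r_2, \ldots, r_s \in \mathbb{C}[z]$ are polynomials such that $p(z) + q(z) e^z + \sum_{j=2}^{s} r_j(z)\, e^z E_{a,j}(-z) = 0$ for all $z \in \mathbb{C}$, then $p = q = r_2 = \cdots = r_s = 0$. -/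
/-! After replacing `z` by `-z` and multiplying by `e^z`, the relation reads
`P(z) e^z + Q(z) + ∑ R_j(z) E_{a,j}(z) = 0`. Its Taylor coefficient at a large index `n`, multiplied
by `n!`, is the value at `n` of the rational function
`∑_k P_k D_k(X) + ∑_j ∑_k R_{j,k} D_k(X) / (X - k + a)^j`, where `D_k = X (X-1) ⋯ (X-k+1)`.
Having infinitely many zeros, this rational function vanishes identically. Its poles for different
`k` lie at the different points `k - a`. As `D_k` has only simple roots and `j ≥ 2`, a nonzero
`R_{j,k}` with `j` maximal would leave a genuine pole at `k - a`, so every `R_{j,k}` is zero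
(`coeff_R_eq_zero`). The remaining identity `∑_k P_k D_k = 0` gives `P = 0` by evaluation at
`0, 1, 2, …` (`coeff_P_eq_zero`), and then `Q = 0`. -/

/-- The entire function `E_{a,j}(z) = ∑_{n≥0} z^n / (n! (n+a)^j)`. -/
noncomputable def Efun (a : ℂ) (j : ℕ) (z : ℂ) : ℂ :=
  ∑' n : ℕ, z ^ n / (n.factorial * ((n : ℂ) + a) ^ j)

/-! ### Falling factorials and linear factors -/

open Polynomial in
/-- The falling factorial polynomial `X (X - 1) ⋯ (X - k + 1)`. -/
noncomputable def fallPoly (k : ℕ) : Polynomial ℂ := ∏ i ∈ Finset.range k, (X - C (i : ℂ))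

open Polynomial in
/-- The linear factor `X - (k - a)`, whose value at `n` is `(n - k) + a`. -/
noncomputable def poleFactor (a k : ℕ) : Polynomial ℂ := X - C ((k : ℂ) - a)

lemma eval_poleFactor (a k : ℕ) (x : ℂ) : (poleFactor a k).eval x = x - k + a := by
  simp [poleFactor]; ring

lemma eval_fallPoly (k n : ℕ) (hk : k ≤ n) :
    (fallPoly k).eval (n : ℂ) = (n.factorial : ℂ) / ((n - k).factorial : ℂ) := by
  have h0 : ((n - k).factorial : ℂ) ≠ 0 := by exact_mod_cast Nat.factorial_ne_zero _
  rw [eq_div_iff h0, ← Nat.factorial_mul_descFactorial hk, Nat.descFactorial_eq_prod_range, mul_comm]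
  push_cast
  congr 1
  rw [fallPoly, Polynomial.eval_prod]
  refine Finset.prod_congr rfl fun i hi => ?_
  have : i ≤ n := by have := Finset.mem_range.1 hi; omega
  simp [Nat.cast_sub this]

lemma eval_fallPoly_eq_zero (k n : ℕ) (hk : n < k) : (fallPoly k).eval (n : ℂ) = 0 := by
  rw [fallPoly, Polynomial.eval_prod]
  exact Finset.prod_eq_zero (Finset.mem_range.2 hk) (by simp)

lemma fallPoly_ne_zero (k : ℕ) : fallPoly k ≠ 0 :=
  Finset.prod_ne_zero_iff.2 fun _ _ => Polynomial.X_sub_C_ne_zero _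

lemma rootMultiplicity_fallPoly_le (k : ℕ) (x : ℂ) : (fallPoly k).rootMultiplicity x ≤ 1 := by
  refine Polynomial.rootMultiplicity_le_one_of_separable ?_ x
  rw [fallPoly, Polynomial.separable_prod_X_sub_C_iff']
  intro i _ j _ hij
  exact_mod_cast hij

/-- The poles belonging to different `k` are distinct. -/
lemma isCoprime_poleFactor (a : ℕ) {k l : ℕ} (h : k ≠ l) :
    IsCoprime (poleFactor a k) (poleFactor a l) := by
  refine Polynomial.isCoprime_X_sub_C_of_isUnit_sub ?_
  rw [isUnit_iff_ne_zero]
  intro h'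
  have : (k : ℂ) = l := by linear_combination h'
  exact h (by exact_mod_cast this)

lemma poly_eq_zero_of_large (p : Polynomial ℂ) (N : ℕ) (h : ∀ n : ℕ, N ≤ n → p.eval (n : ℂ) = 0) :
    p = 0 := by
  refine Polynomial.eq_zero_of_infinite_isRoot p ?_
  refine Set.Infinite.mono (s := (fun n : ℕ => (n : ℂ)) '' Set.Ici N) ?_ ?_
  · rintro _ ⟨n, hn, rfl⟩
    exact h n hn
  · exact (Set.Ici_infinite N).image (Nat.cast_injective.injOn)

/-! ### Vanishing of the coefficients of the rational function -/

open Polynomial in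
/-- The polar parts of the rational function vanish: the pole at `k₀ - a` is isolated by clearing
all the other denominators, and its order is at least `1` because `fallPoly k₀` has only simple
roots while `j ≥ 2`. -/
lemma coeff_R_eq_zero (a : ℕ) (ha : 1 ≤ a) (s N : ℕ) (P : ℕ → ℂ) (R : ℕ → ℕ → ℂ)
    (h : ∀ n : ℕ, N ≤ n → ∑ k ∈ Finset.range N, P k * (fallPoly k).eval (n : ℂ)
      + ∑ j ∈ Finset.Icc 2 s, ∑ k ∈ Finset.range N,
        R j k * (fallPoly k).eval (n : ℂ) / ((poleFactor a k).eval (n : ℂ)) ^ j = 0) :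
    ∀ j ∈ Finset.Icc 2 s, ∀ k < N, R j k = 0 := by
  by_contra! hcon
  obtain ⟨j₀, hj₀, k₀, hk₀, hne₀⟩ := hcon
  -- `J` is the largest exponent occurring at the pole `k₀ - a`.
  obtain ⟨J, hJmem, hJmax⟩ := Finset.exists_max_image
    ((Finset.Icc 2 s).filter fun j => R j k₀ ≠ 0) id ⟨j₀, by simp [hne₀, Finset.mem_Icc.1 hj₀]⟩
  obtain ⟨hJ, hRJ⟩ := Finset.mem_filter.1 hJmem
  have hJ2 := Finset.mem_Icc.1 hJ
  set L := poleFactor a k₀ with hL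
  set K := (Finset.range N).erase k₀ with hK
  set W : ℂ[X] := ∏ k ∈ K, (poleFactor a k) ^ s with hW
  have hV : ∀ j k, ∃ V : ℂ[X], j ∈ Finset.Icc 2 s → k ∈ K → W = (poleFactor a k) ^ j * V := by
    intro j k
    by_cases hjk : j ∈ Finset.Icc 2 s ∧ k ∈ K
    · obtain ⟨V, hV⟩ := (pow_dvd_pow (poleFactor a k) (Finset.mem_Icc.1 hjk.1).2).trans
        (Finset.dvd_prod_of_mem (fun k => (poleFactor a k) ^ s) hjk.2)
      exact ⟨V, fun _ _ => hV⟩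
    · exact ⟨0, fun h1 h2 => absurd ⟨h1, h2⟩ hjk⟩
  choose V hV using hV
  set B : ℂ[X] := W * ∑ k ∈ Finset.range N, C (P k) * fallPoly k
    + ∑ j ∈ Finset.Icc 2 s, ∑ k ∈ K, C (R j k) * fallPoly k * V j k with hB
  set S : ℂ[X] := ∑ j ∈ Finset.Ico 2 J, C (R j k₀) * L ^ (J - j - 1) with hS
  have hpoly : L ^ J * B + fallPoly k₀ * W * (C (R J k₀) + L * S) = 0 := by
    refine poly_eq_zero_of_large _ N fun n hn => ?_
    have hLne : ∀ k < N, (poleFactor a k).eval (n : ℂ) ≠ 0 := by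
      intro k hk h0
      rw [eval_poleFactor, ← Nat.cast_sub (by omega)] at h0
      have h1 : n - k + a = 0 := by exact_mod_cast h0
      omega
    have hn' := h n hn
    -- the pole at `k₀ - a` is separated from the rest of the sum
    have hsplit : ∀ j ∈ Finset.Icc 2 s, ∑ k ∈ Finset.range N,
        R j k * (fallPoly k).eval (n : ℂ) / ((poleFactor a k).eval (n : ℂ)) ^ j =
        R j k₀ * (fallPoly k₀).eval (n : ℂ) / (L.eval (n : ℂ)) ^ j + ∑ k ∈ K,
        R j k * (fallPoly k).eval (n : ℂ) / ((poleFactor a k).eval (n : ℂ)) ^ j := by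
      intro j _
      exact (Finset.add_sum_erase _ (fun k =>
        R j k * (fallPoly k).eval (n : ℂ) / ((poleFactor a k).eval (n : ℂ)) ^ j)
        (Finset.mem_range.2 hk₀)).symm
    rw [Finset.sum_congr rfl hsplit, Finset.sum_add_distrib] at hn'
    have hBn : B.eval (n : ℂ) = W.eval (n : ℂ) *
        (∑ k ∈ Finset.range N, P k * (fallPoly k).eval (n : ℂ) + ∑ j ∈ Finset.Icc 2 s, ∑ k ∈ K,
        R j k * (fallPoly k).eval (n : ℂ) / ((poleFactor a k).eval (n : ℂ)) ^ j) := by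
      rw [hB, mul_add, Finset.mul_sum (Finset.Icc 2 s)]
      simp only [eval_add, eval_mul, eval_finsetSum, eval_C]
      congr 1
      refine Finset.sum_congr rfl fun j hj => ?_
      rw [Finset.mul_sum]
      refine Finset.sum_congr rfl fun k hk => ?_
      have hk' := hLne k (Finset.mem_range.1 (Finset.mem_of_mem_erase hk))
      rw [hV j k hj hk, eval_mul, eval_pow]
      field_simp
    have hL0 : L.eval (n : ℂ) ≠ 0 := hLne k₀ hk₀
    have hTn : (C (R J k₀) + L * S).eval (n : ℂ) = (L.eval (n : ℂ)) ^ J *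
        ∑ j ∈ Finset.Icc 2 s, R j k₀ / (L.eval (n : ℂ)) ^ j := by
      have hsub : ∑ j ∈ Finset.Icc 2 s, R j k₀ / (L.eval (n : ℂ)) ^ j =
          ∑ j ∈ Finset.Ico 2 (J + 1), R j k₀ / (L.eval (n : ℂ)) ^ j := by
        symm
        refine Finset.sum_subset ?_ ?_
        · intro j hj
          have := Finset.mem_Ico.1 hj
          exact Finset.mem_Icc.2 ⟨this.1, by omega⟩
        · intro j hj hj'
          have h0 : R j k₀ = 0 := by
            by_contra h0
            have h1 : j ≤ J := hJmax j (Finset.mem_filter.2 ⟨hj, h0⟩)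
            exact hj' (Finset.mem_Ico.2 ⟨(Finset.mem_Icc.1 hj).1, by omega⟩)
          simp [h0]
      rw [hsub, Finset.sum_Ico_succ_top hJ2.1, mul_add, hS, Finset.mul_sum, Finset.mul_sum, add_comm]
      simp only [eval_add, eval_mul, eval_finsetSum, eval_C, eval_pow]
      congr 1
      · refine Finset.sum_congr rfl fun j hj => ?_
        have := Finset.mem_Ico.1 hj
        obtain ⟨d, rfl⟩ : ∃ d, J = j + d + 1 := ⟨J - j - 1, by omega⟩
        have hd : j + d + 1 - j - 1 = d := by omega
        rw [hd]
        field_simp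
        ring
      · field_simp
    have hTn' : ∑ j ∈ Finset.Icc 2 s,
        R j k₀ * (fallPoly k₀).eval (n : ℂ) / (L.eval (n : ℂ)) ^ j =
        (fallPoly k₀).eval (n : ℂ) * ∑ j ∈ Finset.Icc 2 s, R j k₀ / (L.eval (n : ℂ)) ^ j := by
      rw [Finset.mul_sum]
      exact Finset.sum_congr rfl fun j _ => by ring
    rw [hTn'] at hn'
    rw [eval_add, eval_mul, eval_mul (q := C _ + _), eval_mul, eval_pow, hTn, hBn]
    linear_combination (L.eval (n : ℂ)) ^ J * W.eval (n : ℂ) * hn'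
  set m := (fallPoly k₀).rootMultiplicity ((k₀ : ℂ) - a) with hm
  have hm1 : m ≤ 1 := rootMultiplicity_fallPoly_le _ _
  have hdvd : L ^ m ∣ fallPoly k₀ := pow_rootMultiplicity_dvd _ _
  have hndvd : ¬ L ^ (m + 1) ∣ fallPoly k₀ := by
    intro hd
    have := (le_rootMultiplicity_iff (fallPoly_ne_zero k₀)).2 hd
    omega
  apply hndvd
  have hWcop : IsCoprime (L ^ (m + 1)) W := by
    refine IsCoprime.prod_right fun k hk => IsCoprime.pow ?_
    exact isCoprime_poleFactor a (Finset.ne_of_mem_erase hk).symm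
  refine hWcop.dvd_of_dvd_mul_right
    ((isUnit_C.2 (isUnit_iff_ne_zero.2 hRJ)).dvd_mul_right.1 ?_)
  have e : fallPoly k₀ * W * C (R J k₀) =
      -(L ^ J * B) - fallPoly k₀ * L * (W * S) := by linear_combination hpoly
  rw [e]
  refine dvd_sub (dvd_neg.2 (Dvd.dvd.mul_right (pow_dvd_pow _ (by omega)) _))
    (Dvd.dvd.mul_right ?_ _)
  rw [pow_succ]
  exact mul_dvd_mul_right hdvd L

open Polynomial in
/-- The falling factorials are linearly independent: their matrix of values at `0, 1, 2, …` is
triangular with diagonal entries `n!`. -/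
lemma coeff_P_eq_zero (N : ℕ) (P : ℕ → ℂ)
    (h : ∀ n : ℕ, N ≤ n → ∑ k ∈ Finset.range N, P k * (fallPoly k).eval (n : ℂ) = 0) :
    ∀ k < N, P k = 0 := by
  have hp : ∑ k ∈ Finset.range N, C (P k) * fallPoly k = 0 :=
    poly_eq_zero_of_large _ N fun n hn => by simpa [eval_finsetSum] using h n hn
  intro n
  induction n using Nat.strong_induction_on with
  | _ n ih =>
    intro hn
    have h1 := congrArg (eval (n : ℂ)) hp
    rw [eval_finsetSum, Finset.sum_eq_single n] at h1
    · rw [eval_mul, eval_C, eval_fallPoly n n le_rfl, eval_zero] at h1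
      have h0 : (n.factorial : ℂ) ≠ 0 := by exact_mod_cast Nat.factorial_ne_zero _
      simpa [h0] using h1
    · intro k hk hkn
      rcases lt_or_gt_of_ne hkn with hlt | hgt
      · simp [ih k hlt (Finset.mem_range.1 hk)]
      · simp [eval_fallPoly_eq_zero k n hgt]
    · intro h2
      exact absurd (Finset.mem_range.2 hn) h2

/-! ### Taylor coefficients -/

lemma taylor_unique (c : ℕ → ℂ) (h : ∀ z : ℂ, HasSum (fun n => c n * z ^ n) 0) (n : ℕ) :
    c n = 0 := by
  have h1 : HasFPowerSeriesAt (fun _ : ℂ => (0 : ℂ))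
      (FormalMultilinearSeries.ofScalars ℂ c) 0 := by
    rw [hasFPowerSeriesAt_iff]
    refine Filter.Eventually.of_forall fun z => ?_
    simpa [FormalMultilinearSeries.coeff_ofScalars, mul_comm] using h z
  have h2 := h1.eq_zero
  have h3 := FormalMultilinearSeries.coeff_ofScalars (𝕜 := ℂ) (p := c) (n := n)
  rw [← h3, h2]
  simp [FormalMultilinearSeries.coeff]

/-- Taylor coefficients of a polynomial times a power series. -/
lemma hasSum_poly_mul (N : ℕ) (p : Polynomial ℂ) (hp : p.natDegree < N) (c : ℕ → ℂ) (z f : ℂ)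
    (h : HasSum (fun n => c n * z ^ n) f) :
    HasSum (fun n => (∑ k ∈ Finset.range N, p.coeff k * if k ≤ n then c (n - k) else 0) * z ^ n)
      (p.eval z * f) := by
  rw [Polynomial.eval_eq_sum_range' hp, Finset.sum_mul]
  simp only [Finset.sum_mul]
  refine hasSum_sum fun k _ => ?_
  simp only [mul_assoc]
  refine HasSum.mul_left _ ?_
  have hinj : Function.Injective fun n : ℕ => n + k := fun x y hxy => by simpa using hxy
  refine (hinj.hasSum_iff ?_).1 ?_
  · intro n hn
    have : ¬ k ≤ n := fun hk => hn ⟨n - k, by simp; omega⟩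
    simp [this]
  · refine (h.mul_left (z ^ k)).congr_fun ?_
    intro n
    simp [pow_add]; ring

lemma hasSum_Efun (a : ℕ) (ha : 1 ≤ a) (j : ℕ) (z : ℂ) :
    HasSum (fun n : ℕ => 1 / ((n.factorial : ℂ) * ((n : ℂ) + a) ^ j) * z ^ n) (Efun a j z) := by
  have hs : Summable fun n : ℕ => z ^ n / ((n.factorial : ℂ) * ((n : ℂ) + a) ^ j) := by
    refine Summable.of_norm_bounded (Real.summable_pow_div_factorial ‖z‖) fun n => ?_
    have h1 : ‖(n : ℂ) + a‖ = (n : ℝ) + a := by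
      rw [← Nat.cast_add, Complex.norm_natCast]; push_cast; rfl
    rw [norm_div, norm_mul, norm_pow, norm_pow, h1, Complex.norm_natCast]
    have h2 : (1 : ℝ) ≤ (n : ℝ) + a := by
      have : (1 : ℝ) ≤ a := by exact_mod_cast ha
      have : (0 : ℝ) ≤ n := n.cast_nonneg
      linarith
    have h3 : (0 : ℝ) < n.factorial := by exact_mod_cast n.factorial_pos
    gcongr
    exact le_mul_of_one_le_right h3.le (one_le_pow₀ h2)
  refine hs.hasSum.congr_fun fun n => ?_
  ring

lemma hasSum_exp (z : ℂ) :
    HasSum (fun n : ℕ => 1 / (n.factorial : ℂ) * z ^ n) (Complex.exp z) := by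
  rw [Complex.exp_eq_exp_ℂ]
  refine (NormedSpace.expSeries_div_hasSum_exp z).congr_fun fun n => ?_
  ring

lemma hasSum_poly (p : Polynomial ℂ) (z : ℂ) :
    HasSum (fun n : ℕ => p.coeff n * z ^ n) (p.eval z) := by
  rw [Polynomial.eval_eq_sum_range]
  refine hasSum_sum_of_ne_finset_zero fun n hn => ?_
  rw [Polynomial.coeff_eq_zero_of_natDegree_lt (by simpa using hn), zero_mul]

/-! ### Linear independence -/

/-- Independence of `1, e^z, E_{a,2}, …, E_{a,s}` over the polynomials. -/
lemma independence_pos (a : ℕ) (ha : 1 ≤ a) (s : ℕ) (P Q : Polynomial ℂ) (R : ℕ → Polynomial ℂ)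
    (h : ∀ z : ℂ, Q.eval z + P.eval z * Complex.exp z
      + ∑ j ∈ Finset.Icc 2 s, (R j).eval z * Efun (a : ℂ) j z = 0) :
    Q = 0 ∧ P = 0 ∧ ∀ j ∈ Finset.Icc 2 s, R j = 0 := by
  -- `N` exceeds all the degrees involved
  obtain ⟨N, hNQ, hNP, hNR⟩ : ∃ N, Q.natDegree < N ∧ P.natDegree < N ∧
      ∀ j ∈ Finset.Icc 2 s, (R j).natDegree < N := by
    refine ⟨Q.natDegree + P.natDegree + (Finset.Icc 2 s).sup (fun j => (R j).natDegree) + 1,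
      by omega, by omega, fun j hj => ?_⟩
    have : (R j).natDegree ≤ _ := Finset.le_sup (f := fun j => (R j).natDegree) hj
    omega
  have hcoef := taylor_unique (fun n => Q.coeff n
      + (∑ k ∈ Finset.range N, P.coeff k * if k ≤ n then 1 / ((n - k).factorial : ℂ) else 0)
      + ∑ j ∈ Finset.Icc 2 s, ∑ k ∈ Finset.range N, (R j).coeff k *
        if k ≤ n then 1 / (((n - k).factorial : ℂ) * (((n - k : ℕ) : ℂ) + a) ^ j) else 0) (by
    intro z
    have h1 := hasSum_poly_mul N P hNP _ z _ (hasSum_exp z)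
    have h2 := hasSum_sum fun j (hj : j ∈ Finset.Icc 2 s) =>
      hasSum_poly_mul N (R j) (hNR j hj) _ z _ (hasSum_Efun a ha j z)
    have h3 := ((hasSum_poly Q z).add h1).add h2
    rw [h z] at h3
    refine h3.congr_fun fun n => ?_
    rw [add_mul, add_mul, Finset.sum_mul (Finset.Icc 2 s)])
  have hlarge : ∀ n : ℕ, N ≤ n →
      ∑ k ∈ Finset.range N, P.coeff k * (fallPoly k).eval (n : ℂ)
      + ∑ j ∈ Finset.Icc 2 s, ∑ k ∈ Finset.range N,
        (R j).coeff k * (fallPoly k).eval (n : ℂ) / ((poleFactor a k).eval (n : ℂ)) ^ j = 0 := by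
    intro n hn
    have h1 := congrArg (fun x => (n.factorial : ℂ) * x) (hcoef n)
    simp only [Polynomial.coeff_eq_zero_of_natDegree_lt (lt_of_lt_of_le hNQ hn), zero_add, mul_add,
      mul_zero, Finset.mul_sum] at h1
    rw [← h1]
    congr 1
    · refine Finset.sum_congr rfl fun k hk => ?_
      have hkn : k ≤ n := by have := Finset.mem_range.1 hk; omega
      rw [eval_fallPoly k n hkn, if_pos hkn]
      ring
    · refine Finset.sum_congr rfl fun j _ => Finset.sum_congr rfl fun k hk => ?_
      have hkn : k ≤ n := by have := Finset.mem_range.1 hk; omega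
      rw [eval_fallPoly k n hkn, if_pos hkn, eval_poleFactor, Nat.cast_sub hkn, one_div, mul_inv]
      ring
  have hR0 := coeff_R_eq_zero a ha s N _ _ hlarge
  have hR : ∀ j ∈ Finset.Icc 2 s, R j = 0 := by
    intro j hj
    ext k
    by_cases hk : k < N
    · exact hR0 j hj k hk
    · exact Polynomial.coeff_eq_zero_of_natDegree_lt (by have := hNR j hj; omega)
  have hP0 := coeff_P_eq_zero N P.coeff (fun n hn => by
    have h1 := hlarge n hn
    rwa [Finset.sum_eq_zero (s := Finset.Icc 2 s), add_zero] at h1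
    intro j hj
    simp [hR j hj])
  have hP : P = 0 := by
    ext k
    by_cases hk : k < N
    · exact hP0 k hk
    · exact Polynomial.coeff_eq_zero_of_natDegree_lt (by omega)
  refine ⟨Polynomial.funext fun z => ?_, hP, hR⟩
  have h1 := h z
  rw [Finset.sum_eq_zero (fun j hj => by simp [hR j hj]), hP] at h1
  simpa using h1

theorem stmt1 (a : ℕ) (ha : 1 ≤ a) (s : ℕ) (hs : 2 ≤ s)
    (p q : Polynomial ℂ) (r : ℕ → Polynomial ℂ)
    (h : ∀ z : ℂ, p.eval z + q.eval z * Complex.exp z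
      + ∑ j ∈ Finset.Icc 2 s, (r j).eval z * (Complex.exp z * Efun (a : ℂ) j (-z)) = 0) :
    p = 0 ∧ q = 0 ∧ ∀ j ∈ Finset.Icc 2 s, r j = 0 := by
  have hcomp : ∀ u : Polynomial ℂ, u.comp (-Polynomial.X) = 0 → u = 0 := by
    intro u hu
    refine Polynomial.funext fun z => ?_
    have := congrArg (Polynomial.eval (-z)) hu
    simpa using this
  -- multiplication by `e^z` exchanges the roles of `p` and `q`
  have key := independence_pos a ha s (p.comp (-Polynomial.X)) (q.comp (-Polynomial.X))
    (fun j => (r j).comp (-Polynomial.X)) (by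
      intro z
      have h1 := congrArg (fun x => Complex.exp z * x) (h (-z))
      have he : Complex.exp z * Complex.exp (-z) = 1 := by
        rw [← Complex.exp_add]; simp
      simp only [mul_add, neg_neg, Finset.mul_sum, mul_zero] at h1
      have h2 : ∀ j ∈ Finset.Icc 2 s, Complex.exp z * (Polynomial.eval (-z) (r j) *
          (Complex.exp (-z) * Efun a j z)) = Polynomial.eval (-z) (r j) * Efun a j z := by
        intro j _
        linear_combination (Polynomial.eval (-z) (r j) * Efun a j z) * he
      rw [Finset.sum_congr rfl h2] at h1
      simp only [Polynomial.eval_comp, Polynomial.eval_neg, Polynomial.eval_X]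
      linear_combination h1 - Polynomial.eval (-z) q * he)
  exact ⟨hcomp _ key.2.1, hcomp _ key.1, fun j hj => hcomp _ (key.2.2 j hj)⟩
end

section
/- For every real $z > 0$: $\log 2 = 2z\, E_{1,2}(-2z) - z\, E_{1,2}(-z) + e^{-z} \int_0^{\infty} \log\left(1 + \frac{t}{z}\right) e^{-t}\,dt - e^{-2z} \int_0^{\infty} \log\left(1 + \frac{t}{2z}\right) e^{-t}\,dt$, both integrals being convergent. -/
/-!
The functions in the statement are exponential integrals: `x * E_{1,2}(-x)` is the entire
exponential integral `Ein x`, with derivative `(1 - e^{-x}) / x`, and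
`e^{-x} ∫_{t > 0} log (1 + t / x) e^{-t} dt` is `E₁ x`, with derivative `-e^{-x} / x`.
Hence `Ein x - E₁ x - log x` is constant on `(0, ∞)`, and comparing its values at `z` and `2 * z`
gives the identity.

The derivative of `Ein` is obtained termwise (`hasDerivAt_ein`). For `E₁`, the translation
`s = t + x` gives `E₁ x = ∫_{s > x} log s e^{-s} ds - log x e^{-x}` (`expInt_eq`), to which the
fundamental theorem of calculus applies (`hasDerivAt_expInt`).
-/

/-- The (real-valued) function `E_{a,j}(z) = ∑_{n≥0} z^n / (n! (n+a)^j)`. -/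
noncomputable def Ereal (a : ℝ) (j : ℕ) (z : ℝ) : ℝ :=
  ∑' n : ℕ, z ^ n / (n.factorial * ((n : ℝ) + a) ^ j)

open MeasureTheory Set

lemma integrableOn_log_one_add (x : ℝ) (hx : 0 < x) :
    IntegrableOn (fun t : ℝ => Real.log (1 + t / x) * Real.exp (-t)) (Ioi 0) := by
  have h2 : IntegrableOn (fun t : ℝ => (1 / x) * (Real.exp (-t) * t ^ ((2 : ℝ) - 1))) (Ioi 0) :=
    (Real.GammaIntegral_convergent (s := 2) (by norm_num)).const_mul _
  refine Integrable.mono' h2 (by fun_prop) ?_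
  filter_upwards [ae_restrict_mem measurableSet_Ioi] with t ht
  have ht : 0 < t := ht
  have hq : 0 < t / x := by positivity
  have h0 : 0 ≤ Real.log (1 + t / x) := Real.log_nonneg (by linarith)
  have h1 : Real.log (1 + t / x) ≤ t / x := by
    have := Real.log_le_sub_one_of_pos (show 0 < 1 + t / x by linarith)
    linarith
  rw [Real.norm_eq_abs, abs_of_nonneg (by positivity)]
  have e : ((2 : ℝ) - 1) = 1 := by norm_num
  rw [e, Real.rpow_one]
  calc Real.log (1 + t / x) * Real.exp (-t) ≤ t / x * Real.exp (-t) := by gcongr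
    _ = _ := by ring

lemma preimage_add_Ioi (x : ℝ) : (fun t : ℝ => t + x) ⁻¹' (Ioi x) = Ioi 0 := by
  ext t; simp

/-- The integrand of `expInt_eq` after the translation `s = t + x`. -/
lemma log_mul_exp_translate (x : ℝ) (hx : 0 < x) (t : ℝ) (ht : 0 < t) :
    Real.log (t + x) * Real.exp (-(t + x)) =
      Real.exp (-x) * (Real.log (1 + t / x) * Real.exp (-t))
        + Real.log x * Real.exp (-x) * Real.exp (-t) := by
  have h : t + x = x * (1 + t / x) := by field_simp; ring
  have hq : 0 < t / x := by positivity
  have hl : Real.log (t + x) = Real.log x + Real.log (1 + t / x) := by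
    rw [h, Real.log_mul hx.ne' (by linarith)]
  rw [hl, show -(t + x) = -t + -x by ring, Real.exp_add]
  ring

lemma integrableOn_log_mul_exp (x : ℝ) (hx : 0 < x) :
    IntegrableOn (fun s : ℝ => Real.log s * Real.exp (-s)) (Ioi x) := by
  rw [← (measurePreserving_add_right volume x).integrableOn_comp_preimage
    (measurableEmbedding_addRight x), preimage_add_Ioi]
  have h := ((integrableOn_log_one_add x hx).const_mul (Real.exp (-x))).add
    ((integrableOn_exp_neg_Ioi 0).const_mul (Real.log x * Real.exp (-x)))
  refine IntegrableOn.congr_fun h (fun t ht => ?_) measurableSet_Ioi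
  exact (log_mul_exp_translate x hx t ht).symm

/-- The exponential integral `E₁ x = e^{-x} ∫_{t > 0} log (1 + t / x) e^{-t} dt`. -/
noncomputable def expInt (x : ℝ) : ℝ :=
  Real.exp (-x) * ∫ t in Ioi (0 : ℝ), Real.log (1 + t / x) * Real.exp (-t)

lemma expInt_eq (x : ℝ) (hx : 0 < x) :
    expInt x = (∫ s in Ioi x, Real.log s * Real.exp (-s)) - Real.log x * Real.exp (-x) := by
  rw [← (measurePreserving_add_right volume x).setIntegral_preimage_emb
    (measurableEmbedding_addRight x), preimage_add_Ioi,
    setIntegral_congr_fun measurableSet_Ioi (fun t ht => log_mul_exp_translate x hx t ht),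
    integral_add ((integrableOn_log_one_add x hx).const_mul (Real.exp (-x)))
      ((integrableOn_exp_neg_Ioi 0).const_mul (Real.log x * Real.exp (-x))),
    integral_const_mul, integral_const_mul, integral_exp_neg_Ioi_zero, expInt]
  ring

lemma hasDerivAt_expInt (x : ℝ) (hx : 0 < x) :
    HasDerivAt expInt (-(Real.exp (-x) / x)) x := by
  have hcont : ContinuousOn (fun s : ℝ => Real.log s * Real.exp (-s)) (Ioi 0) := by
    refine ContinuousOn.mul (Real.continuousOn_log.mono fun s hs => ?_) (by fun_prop)
    simpa using (ne_of_gt hs : s ≠ 0)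
  have hint : ∀ y : ℝ, 0 < y →
      IntervalIntegrable (fun s : ℝ => Real.log s * Real.exp (-s)) volume 1 y := fun y hy =>
    (hcont.mono fun s hs => lt_of_lt_of_le (lt_min one_pos hy) hs.1).intervalIntegrable
  have hF : HasDerivAt (fun y => ∫ s in (1 : ℝ)..y, Real.log s * Real.exp (-s))
      (Real.log x * Real.exp (-x)) x :=
    intervalIntegral.integral_hasDerivAt_right (hint x hx)
      (hcont.stronglyMeasurableAtFilter isOpen_Ioi x hx)
      (hcont.continuousAt (Ioi_mem_nhds hx))
  have hexp : HasDerivAt (fun y : ℝ => Real.exp (-y)) (-Real.exp (-x)) x := by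
    simpa using (hasDerivAt_neg x).exp
  have hD := (hF.const_sub (∫ s in Ioi (1 : ℝ), Real.log s * Real.exp (-s))).sub
    ((Real.hasDerivAt_log hx.ne').mul hexp)
  have hD' := hD.congr_of_eventuallyEq (f₁ := expInt) (by
    filter_upwards [Ioi_mem_nhds hx] with y hy
    have h := intervalIntegral.integral_interval_add_Ioi' (hint y hy)
      (integrableOn_log_mul_exp y hy)
    rw [expInt_eq y hy]
    simp only [Pi.sub_apply, Pi.mul_apply]
    linarith)
  refine hD'.congr_deriv ?_
  field_simp
  ring

/-- `x * E_{1,2}(-x)` is the entire exponential integral `Ein x`. -/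
lemma hasDerivAt_ein (x : ℝ) (hx : 0 < x) :
    HasDerivAt (fun y => y * Ereal 1 2 (-y)) ((1 - Real.exp (-x)) / x) x := by
  have hser : HasDerivAt
      (fun y : ℝ => ∑' n : ℕ, -((-y) ^ (n + 1) / (n.factorial * ((n : ℝ) + 1) ^ 2)))
      (∑' n : ℕ, (-x) ^ n / ((n + 1).factorial : ℝ)) x := by
    refine hasDerivAt_tsum_of_isPreconnected (u := fun n : ℕ => (x + 1) ^ n / (n.factorial : ℝ))
      (g' := fun n y => (-y) ^ n / ((n + 1).factorial : ℝ))
      (t := Ioo (-(x + 1)) (x + 1)) (y₀ := 0)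
      (Real.summable_pow_div_factorial _) isOpen_Ioo isPreconnected_Ioo ?_ ?_ ?_ ?_ ?_
    · intro n y _
      have h := ((((hasDerivAt_neg y).pow (n + 1)).div_const
        ((n.factorial : ℝ) * ((n : ℝ) + 1) ^ 2))).neg
      refine h.congr_deriv ?_
      have hf : (n.factorial : ℝ) ≠ 0 := by positivity
      have hn : (n : ℝ) + 1 ≠ 0 := by positivity
      rw [Nat.factorial_succ]
      push_cast
      field_simp
    · intro n y hy
      rw [norm_div, norm_pow, norm_neg, Real.norm_eq_abs, Real.norm_natCast]
      have : |y| ≤ x + 1 := abs_le.2 ⟨hy.1.le, hy.2.le⟩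
      have hle : (n.factorial : ℝ) ≤ ((n + 1).factorial : ℝ) := by
        exact_mod_cast Nat.factorial_le (Nat.le_succ n)
      gcongr
    · constructor <;> linarith
    · simp
    · constructor <;> linarith
  have hval : ∑' n : ℕ, (-x) ^ n / ((n + 1).factorial : ℝ) = (1 - Real.exp (-x)) / x := by
    have he : Real.exp (-x) = ∑' n : ℕ, (-x) ^ n / (n.factorial : ℝ) := by
      rw [Real.exp_eq_exp_ℝ]
      exact (NormedSpace.expSeries_div_hasSum_exp (-x)).tsum_eq.symm
    rw [he, (Real.summable_pow_div_factorial (-x)).tsum_eq_zero_add, eq_div_iff hx.ne',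
      ← tsum_mul_right]
    simp only [pow_zero, Nat.factorial_zero, Nat.cast_one, div_one, sub_add_cancel_left]
    rw [← tsum_neg]
    exact tsum_congr fun n => by ring
  rw [← hval]
  convert hser using 1
  funext y
  rw [Ereal, ← tsum_mul_left]
  exact tsum_congr fun n => by ring

/-- The constant value is `γ`, Euler's constant, but only constancy matters here. -/
lemma ein_sub_expInt_sub_log_const (x y : ℝ) (hx : 0 < x) (hy : 0 < y) :
    x * Ereal 1 2 (-x) - expInt x - Real.log x = y * Ereal 1 2 (-y) - expInt y - Real.log y := by
  have hD : ∀ w ∈ Ioi (0 : ℝ),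
      HasDerivAt (fun w => w * Ereal 1 2 (-w) - expInt w - Real.log w) 0 w := by
    intro w hw
    have hw' : w ≠ 0 := ne_of_gt hw
    refine (((hasDerivAt_ein w hw).sub (hasDerivAt_expInt w hw)).sub
      (Real.hasDerivAt_log hw')).congr_deriv ?_
    field_simp
    ring
  exact isOpen_Ioi.is_const_of_deriv_eq_zero isPreconnected_Ioi
    (fun w hw => (hD w hw).differentiableAt.differentiableWithinAt)
    (fun w hw => (hD w hw).deriv) hx hy

theorem stmt11 (z : ℝ) (hz : 0 < z) :
    MeasureTheory.IntegrableOn (fun t : ℝ => Real.log (1 + t / z) * Real.exp (-t)) (Set.Ioi 0) ∧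
    MeasureTheory.IntegrableOn
      (fun t : ℝ => Real.log (1 + t / (2 * z)) * Real.exp (-t)) (Set.Ioi 0) ∧
    Real.log 2
      = 2 * z * Ereal 1 2 (-(2 * z)) - z * Ereal 1 2 (-z)
        + Real.exp (-z) * (∫ t in Set.Ioi (0 : ℝ), Real.log (1 + t / z) * Real.exp (-t))
        - Real.exp (-(2 * z)) *
            ∫ t in Set.Ioi (0 : ℝ), Real.log (1 + t / (2 * z)) * Real.exp (-t) := by
  refine ⟨integrableOn_log_one_add z hz, integrableOn_log_one_add (2 * z) (by positivity), ?_⟩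
  have h := ein_sub_expInt_sub_log_const (2 * z) z (by positivity) hz
  rw [Real.log_mul two_ne_zero hz.ne'] at h
  simp only [expInt] at h
  linarith
end
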